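/- arXiv:1401.3636 — 4 statements merged into one kernel-verified Lean document; each statement's English description precedes it below -/
import Mathlib

section
/- Let φ : ℂ → ℂ be analytic on the open disk {t : |t − 1| < R} for some R > 1, and let a, b be complex numbers such that b is not a nonpositive integer or zero. Suppose the double series Σ_{k≥0} Σ_{n≥k} [(a)_k / ((b)_k k!)] · [(−1)^n (−n)_k / n!] · φ^{(n)}(1) is absolutely summable (so the order of summation may be interchanged). Then Σ_{k=0}^∞ (a)_k φ^{(k)}(0) / ((b)_k k!) = Σ_{k=0}^∞ (−1)^k (b−a)_k φ^{(k)}(1) / ((b)_k k!). -/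
/-- The Pochhammer symbol `(a)_k = a (a+1) ⋯ (a+k-1)`. -/
noncomputable def poch (a : ℂ) (k : ℕ) : ℂ := Polynomial.eval a (ascPochhammer ℂ k)

/-!
Since `(-1)ⁿ (-n)_k / n! = (-1)ᵐ / m!` for `n = k + m`, the double series has the terms
`(a)_k / ((b)_k k!) · (-1)ᵐ / m! · φ^{(k+m)}(1)`. Summing over `m` for fixed `k` gives the Taylor
expansion of `φ^{(k)}` about `1`, evaluated at `0`; summing over `k` for fixed `n` gives
`(-1)ⁿ (b-a)_n / ((b)_n n!)` by the Chu–Vandermonde identity.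
-/

section Pochhammer

open Finset Polynomial
open scoped Nat

theorem descPochhammer_eval_add {R : Type*} [CommRing R] (r s : R) (n : ℕ) :
    (descPochhammer R n).eval (r + s) = ∑ p ∈ antidiagonal n,
      (n.choose p.1 : R) * ((descPochhammer R p.1).eval r * (descPochhammer R p.2).eval s) := by
  have smeval_eq (k : ℕ) (x : R) : (descPochhammer ℤ k).smeval x = (descPochhammer R k).eval x := by
    rw [descPochhammer_smeval_eq_ascPochhammer, ascPochhammer_smeval_eq_eval,
      descPochhammer_eval_eq_ascPochhammer]
  simpa only [smeval_eq] using Ring.descPochhammer_smeval_add n (Commute.all r s)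

theorem ascPochhammer_eval_sub {R : Type*} [CommRing R] (a b : R) (n : ℕ) :
    (ascPochhammer R n).eval (b - a) = ∑ p ∈ antidiagonal n, (n.choose p.1 : R) *
      ((-1) ^ p.1 * (ascPochhammer R p.1).eval a * (ascPochhammer R p.2).eval (b + p.1)) := by
  have rising_eq_falling :
      (ascPochhammer R n).eval (b - a) = (descPochhammer R n).eval (-a + (b + n - 1)) := by
    rw [descPochhammer_eval_eq_ascPochhammer]
    congr 1
    ring
  rw [rising_eq_falling, descPochhammer_eval_add]
  refine sum_congr rfl fun p hp => ?_
  have left_factor : (descPochhammer R p.1).eval (-a) =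
      (-1) ^ p.1 * (ascPochhammer R p.1).eval a := by
    rw [← neg_neg a, ascPochhammer_eval_neg_eq_descPochhammer, neg_neg, ← mul_assoc, ← mul_pow]
    simp
  have right_factor : (descPochhammer R p.2).eval (b + n - 1) =
      (ascPochhammer R p.2).eval (b + p.1) := by
    rw [descPochhammer_eval_eq_ascPochhammer, ← mem_antidiagonal.1 hp]
    congr 1
    push_cast
    ring
  rw [left_factor, right_factor]

theorem ascPochhammer_add_eval {R : Type*} [CommSemiring R] (b : R) (i j : ℕ) :
    (ascPochhammer R (i + j)).eval b =
      (ascPochhammer R i).eval b * (ascPochhammer R j).eval (b + i) := by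
  simp [← ascPochhammer_mul]

theorem ascPochhammer_eval_ne_zero {R : Type*} [CommRing R] [IsDomain R] {b : R}
    (hb : ∀ n : ℕ, b ≠ -(n : R)) (k : ℕ) : (ascPochhammer R k).eval b ≠ 0 := by
  rw [Ne, ascPochhammer_eval_eq_zero_iff]
  rintro ⟨n, -, hn⟩
  exact hb n (by rw [hn, neg_neg])

variable {K : Type*} [Field K] [CharZero K]

theorem neg_one_pow_mul_ascPochhammer_eval_neg_div_factorial (k m : ℕ) :
    (-1 : K) ^ (k + m) * (ascPochhammer K k).eval (-((k + m : ℕ) : K)) / ((k + m)! : K) =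
      (-1) ^ m / (m ! : K) := by
  have factorial_eq : ((k + m)! : K) = (m ! : K) * ((k + m).descFactorial k : K) := by
    rw [← Nat.factorial_mul_descFactorial (Nat.le_add_right k m), Nat.add_sub_cancel_left]
    push_cast
    rfl
  have descFactorial_ne_zero : ((k + m).descFactorial k : K) ≠ 0 := by
    simp [Nat.descFactorial_eq_zero_iff_lt]
  have sign_sq : ((-1 : K) ^ k) * (-1) ^ k = 1 := by simp [← mul_pow]
  have hm : (m ! : K) ≠ 0 := mod_cast m.factorial_ne_zero
  rw [ascPochhammer_eval_neg_eq_descPochhammer, descPochhammer_eval_eq_descFactorial,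
    factorial_eq, div_eq_div_iff (mul_ne_zero hm descFactorial_ne_zero) hm, pow_add]
  linear_combination ((-1) ^ m * ((k + m).descFactorial k : K) * m !) * sign_sq

theorem sum_antidiagonal_ascPochhammer_eval_div {a b : K} (hb : ∀ n : ℕ, b ≠ -(n : K)) (n : ℕ) :
    ∑ p ∈ antidiagonal n, (ascPochhammer K p.1).eval a / ((ascPochhammer K p.1).eval b * p.1 !) *
        ((-1) ^ p.2 / (p.2 ! : K)) =
      (-1) ^ n * (ascPochhammer K n).eval (b - a) / ((ascPochhammer K n).eval b * n !) := by
  rw [ascPochhammer_eval_sub, mul_sum, sum_div]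
  refine sum_congr rfl fun ⟨i, j⟩ hij => ?_
  obtain rfl : i + j = n := mem_antidiagonal.1 hij
  have hbi := ascPochhammer_eval_ne_zero hb i
  have hbj : (ascPochhammer K j).eval (b + i) ≠ 0 :=
    right_ne_zero_of_mul (ascPochhammer_add_eval b i j ▸ ascPochhammer_eval_ne_zero hb (i + j))
  have hi : (i ! : K) ≠ 0 := mod_cast i.factorial_ne_zero
  have hj : (j ! : K) ≠ 0 := mod_cast j.factorial_ne_zero
  have hn : ((i + j)! : K) ≠ 0 := mod_cast (i + j).factorial_ne_zero
  have sign_sq : ((-1 : K) ^ i) * (-1) ^ i = 1 := by simp [← mul_pow]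
  rw [ascPochhammer_add_eval, Nat.cast_add_choose, pow_add]
  field_simp
  linear_combination -(ascPochhammer K i).eval a * sign_sq

end Pochhammer

section Series

open Finset
open scoped Nat

theorem hasSum_smul_antidiagonal {A K E : Type*} [AddMonoid A] [HasAntidiagonal A] [Semiring K]
    [AddCommMonoid E] [Module K E] [TopologicalSpace E] [ContinuousAdd E] [RegularSpace E]
    {t : A × A → K} {c : A → E} {s : E} (h : HasSum (fun p => t p • c (p.1 + p.2)) s) :
    HasSum (fun n => (∑ p ∈ antidiagonal n, t p) • c n) s := by
  refine (HasAntidiagonal.sigmaAntidiagonalEquivProd.hasSum_iff.2 h).sigma fun n => ?_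
  have fibre_sum : (∑ p ∈ antidiagonal n, t p) • c n =
      ∑ p : antidiagonal n, t p • c (p.1.1 + p.1.2) := by
    rw [sum_smul, sum_coe_sort (antidiagonal n) fun p => t p • c (p.1 + p.2)]
    exact sum_congr rfl fun p hp => by rw [mem_antidiagonal.1 hp]
  rw [fibre_sum]
  exact hasSum_fintype _

theorem hasSum_taylorSeries_iteratedDeriv_on_ball {E : Type*} [NormedAddCommGroup E]
    [NormedSpace ℂ E] [CompleteSpace E] {f : ℂ → E} {c z : ℂ} {r : ℝ}
    (hf : DifferentiableOn ℂ f (Metric.ball c r)) (hz : z ∈ Metric.ball c r) (k : ℕ) :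
    HasSum (fun m => (m ! : ℂ)⁻¹ • (z - c) ^ m • iteratedDeriv (k + m) f c)
      (iteratedDeriv k f z) := by
  have differentiableOn_iteratedDeriv :
      DifferentiableOn ℂ (iteratedDeriv k f) (Metric.ball c r) := by
    rw [iteratedDeriv_eq_iterate]
    exact ((hf.analyticOnNhd Metric.isOpen_ball).iterated_deriv k).differentiableOn
  have iteratedDeriv_comp (m : ℕ) :
      iteratedDeriv m (iteratedDeriv k f) = iteratedDeriv (k + m) f := by
    simp only [iteratedDeriv_eq_iterate, ← Function.iterate_add_apply, add_comm]
  simpa only [iteratedDeriv_comp] using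
    Complex.hasSum_taylorSeries_on_ball differentiableOn_iteratedDeriv hz

end Series

theorem ramanujan_entry20_general
    {E : Type*} [NormedAddCommGroup E] [NormedSpace ℂ E] [CompleteSpace E]
    (φ : ℂ → E) (R : ℝ) (hR : 1 < R)
    (hφ : AnalyticOnNhd ℂ φ (Metric.ball (1 : ℂ) R))
    (a b : ℂ)
    (hb : ∀ n : ℕ, b ≠ -(n : ℂ))
    (hsum : Summable fun p : ℕ × ℕ =>
      (poch a p.1 / (poch b p.1 * (p.1.factorial : ℂ)) *
        ((-1) ^ (p.1 + p.2) * poch (-((p.1 + p.2 : ℕ) : ℂ)) p.1 / ((p.1 + p.2).factorial : ℂ))) •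
          iteratedDeriv (p.1 + p.2) φ 1) :
    ∃ S : E,
      HasSum (fun k : ℕ => (poch a k / (poch b k * (k.factorial : ℂ))) • iteratedDeriv k φ 0) S ∧
      HasSum (fun k : ℕ => ((-1) ^ k * poch (b - a) k / (poch b k * (k.factorial : ℂ))) •
        iteratedDeriv k φ 1) S := by
  unfold poch at hsum ⊢
  simp only [neg_one_pow_mul_ascPochhammer_eval_neg_div_factorial] at hsum
  refine ⟨_, hsum.hasSum.prod_fiberwise fun k => ?_, ?_⟩
  · have taylor := hasSum_taylorSeries_iteratedDeriv_on_ball hφ.differentiableOn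
      (show (0 : ℂ) ∈ Metric.ball 1 R by simpa using hR) k
    simpa only [zero_sub, smul_smul, div_eq_inv_mul, mul_assoc] using
      taylor.const_smul ((ascPochhammer ℂ k).eval a / ((ascPochhammer ℂ k).eval b * k.factorial))
  · simpa only [sum_antidiagonal_ascPochhammer_eval_div hb] using
      hasSum_smul_antidiagonal (c := fun n => iteratedDeriv n φ 1) hsum.hasSum

/-- Ramanujan's Entry 20: if `φ` is analytic on a disk of radius `R > 1` about `1` and the
double series may be summed in either order, then
`Σ_{k≥0} (a)_k φ^{(k)}(0) / ((b)_k k!) = Σ_{k≥0} (-1)^k (b-a)_k φ^{(k)}(1) / ((b)_k k!)`. -/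
theorem ramanujan_entry20
    (φ : ℂ → ℂ) (R : ℝ) (hR : 1 < R)
    (hφ : AnalyticOnNhd ℂ φ (Metric.ball (1 : ℂ) R))
    (a b : ℂ)
    (hb : ∀ n : ℕ, b ≠ -(n : ℂ))
    (hsum : Summable (fun p : ℕ × ℕ =>
      ‖(poch a p.1 / (poch b p.1 * (Nat.factorial p.1 : ℂ))) *
        ((-1 : ℂ) ^ (p.1 + p.2) * poch (-(((p.1 + p.2 : ℕ)) : ℂ)) p.1 /
          (Nat.factorial (p.1 + p.2) : ℂ)) * iteratedDeriv (p.1 + p.2) φ 1‖)) :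
    ∑' k : ℕ, poch a k * iteratedDeriv k φ 0 / (poch b k * (Nat.factorial k : ℂ))
      = ∑' k : ℕ, (-1 : ℂ) ^ k * poch (b - a) k * iteratedDeriv k φ 1 /
          (poch b k * (Nat.factorial k : ℂ)) := by
  obtain ⟨S, hzero, hone⟩ := ramanujan_entry20_general φ R hR hφ a b hb hsum.of_norm
  simpa only [smul_eq_mul, div_mul_eq_mul_div] using hzero.tsum_eq.trans hone.tsum_eq.symm
end

section
/- Let n be a natural number and let a, d be complex numbers such that (2a+1)_k ≠ 0 and (d)_k ≠ 0 for all 0 ≤ k ≤ 2n+1, d ≠ 0, 2a+1 ≠ 0, and (a+3/2)_n ≠ 0. Then the terminating hypergeometric sum Σ_{k=0}^{2n+1} (−2n−1)_k (a)_k (d+1)_k 2^k / ((2a+1)_k (d)_k k!) equals ((1 − 2a/d)/(2a+1)) · (3/2)_n / (a+3/2)_n. -/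
/-!
Since `(d+1)_k / (d)_k = 1 + k/d`, the `₃F₂` splits into Gauss sums `F N = ₂F₁(-N, a; 2a+1; 2)`,
and `F` is the binomial transform of `k ↦ (-2)^k (a)_k / (2a+1)_k`. Gauss' contiguous relation in
`N` reads `(2a+2+N) F (N+2) = F (N+1) + (N+1) F N` at this argument, and decouples into the
first-order relations `(2a+2n+1) F (2n+1) = (2n+1) F (2n)` and `F (2n+2) = F (2n+1)`.
-/

open Finset

section BinomialTransform

/-- The binomial transform `N ↦ ∑ k, (N choose k) u k` of a sequence `u`, which turns the terms of
a terminating hypergeometric sum into the sequence of its values in the terminating parameter. -/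
def binomialTransform {R : Type*} [Semiring R] (u : ℕ → R) (N : ℕ) : R :=
  ∑ k ∈ range (N + 1), (N.choose k : R) * u k

theorem binomialTransform_succ {R : Type*} [Semiring R] (u : ℕ → R) (N : ℕ) :
    binomialTransform u (N + 1) =
      binomialTransform u N + binomialTransform (fun k ↦ u (k + 1)) N :=
  sum_choose_succ_mul (fun k _ ↦ u k) N

theorem binomialTransform_natCast_mul {R : Type*} [Ring R] (u : ℕ → R) (N : ℕ) :
    binomialTransform (fun k ↦ (k : R) * u k) (N + 1) =
      (N + 1) * (binomialTransform u (N + 1) - binomialTransform u N) := by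
  rw [binomialTransform_succ u N, add_sub_cancel_left]
  simp only [binomialTransform]
  rw [sum_range_succ', mul_sum]
  simp only [Nat.cast_zero, zero_mul, mul_zero, add_zero, ← mul_assoc]
  refine sum_congr rfl fun k _ ↦ congrArg (· * u (k + 1)) ?_
  exact_mod_cast congrArg (Nat.cast : ℕ → R) (Nat.add_one_mul_choose_eq N k).symm

/-- Gauss' contiguous relation in the terminating parameter: the hypothesis says that `u k` is
`(-x)^k (b)_k / (c)_k` up to a constant, so that its transform is `₂F₁(-N, b; c; x)`. -/
theorem binomialTransform_contiguous {R : Type*} [CommRing R] {u : ℕ → R} {b c x : R} {N : ℕ}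
    (hu : ∀ k ≤ N + 1, (c + k) * u (k + 1) = -x * (b + k) * u k) :
    (c + (N + 1)) * binomialTransform u (N + 2) =
      (c + 2 * (N + 1) - (b + (N + 1)) * x) * binomialTransform u (N + 1) +
        (N + 1) * (x - 1) * binomialTransform u N := by
  have transformed_hu :
      c * binomialTransform (fun k ↦ u (k + 1)) (N + 1) +
          binomialTransform (fun k ↦ (k : R) * u (k + 1)) (N + 1) =
        -x * (b * binomialTransform u (N + 1) +
          binomialTransform (fun k ↦ (k : R) * u k) (N + 1)) := by
    simp only [binomialTransform, mul_sum, ← sum_add_distrib]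
    refine sum_congr rfl fun k hk ↦ ?_
    linear_combination ((N + 1).choose k : R) * hu k (Nat.lt_succ_iff.1 (mem_range.1 hk))
  rw [binomialTransform_natCast_mul (fun k ↦ u (k + 1)), binomialTransform_natCast_mul u]
    at transformed_hu
  linear_combination transformed_hu + (c + (N + 1)) * binomialTransform_succ u (N + 1)
    - (N + 1) * binomialTransform_succ u N

end BinomialTransform

section Pochhammer

theorem mul_ascPochhammer_eval_add_one {R : Type*} [CommSemiring R] (r : R) (k : ℕ) :
    r * (ascPochhammer R k).eval (r + 1) = (ascPochhammer R k).eval r * (r + k) := by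
  rw [← ascPochhammer_succ_eval, ascPochhammer_succ_left]
  simp only [Polynomial.eval_mul, Polynomial.eval_X, Polynomial.eval_comp, Polynomial.eval_add,
    Polynomial.eval_one]

theorem ascPochhammer_eval_neg_natCast {R : Type*} [Ring R] (N k : ℕ) :
    (ascPochhammer R k).eval (-(N : R)) = (-1) ^ k * (k.factorial * N.choose k) := by
  rw [ascPochhammer_eval_neg_eq_descPochhammer, descPochhammer_eval_eq_descFactorial,
    Nat.descFactorial_eq_factorial_mul_choose, Nat.cast_mul]

variable {R : Type*} [CommRing R] [IsDomain R] {r : R} {k m : ℕ}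

theorem ascPochhammer_eval_ne_zero_iff :
    (ascPochhammer R m).eval r ≠ 0 ↔ ∀ k < m, r + k ≠ 0 := by
  simp only [ne_eq, ascPochhammer_eval_eq_zero_iff, not_exists, not_and, add_comm r,
    add_eq_zero_iff_eq_neg]

theorem ascPochhammer_eval_ne_zero_of_le (hm : (ascPochhammer R m).eval r ≠ 0) (hk : k ≤ m) :
    (ascPochhammer R k).eval r ≠ 0 :=
  ascPochhammer_eval_ne_zero_iff.2 fun j hj ↦
    ascPochhammer_eval_ne_zero_iff.1 hm j (hj.trans_le hk)

end Pochhammer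

section GaussSum

variable {K : Type*} [Field K]

/-- The terminating Gauss sum `₂F₁(-N, b; c; x)`, in which `(-N)_k / k!` has been written as
`(-1)^k (N choose k)`; meaningful when `(c)_N ≠ 0`. -/
noncomputable def terminating2F1 (b c x : K) (N : ℕ) : K :=
  binomialTransform
    (fun k ↦ (-x) ^ k * ((ascPochhammer K k).eval b / (ascPochhammer K k).eval c)) N

theorem terminating2F1_zero (b c x : K) : terminating2F1 b c x 0 = 1 := by
  simp [terminating2F1, binomialTransform]

theorem terminating2F1_one (b c x : K) : terminating2F1 b c x 1 = 1 - x * (b / c) := by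
  simp [terminating2F1, binomialTransform, sum_range_succ, sub_eq_add_neg]

theorem terminating2F1_contiguous {b c x : K} {N : ℕ}
    (hc : (ascPochhammer K (N + 2)).eval c ≠ 0) :
    (c + (N + 1)) * terminating2F1 b c x (N + 2) =
      (c + 2 * (N + 1) - (b + (N + 1)) * x) * terminating2F1 b c x (N + 1) +
        (N + 1) * (x - 1) * terminating2F1 b c x N := by
  refine binomialTransform_contiguous fun k hk ↦ ?_
  have hck : c + k ≠ 0 := ascPochhammer_eval_ne_zero_iff.1 hc k (by omega)
  rw [ascPochhammer_succ_eval, ascPochhammer_succ_eval, mul_div_mul_comm, pow_succ]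
  field_simp

theorem sum_3F2_add_one_eq_terminating2F1 [CharZero K] (b c x : K) {d : K} {N : ℕ}
    (hd : (ascPochhammer K (N + 1)).eval d ≠ 0) :
    ∑ k ∈ range (N + 2),
        (ascPochhammer K k).eval (-((N + 1 : ℕ) : K)) * (ascPochhammer K k).eval b *
            (ascPochhammer K k).eval (d + 1) * x ^ k /
          ((ascPochhammer K k).eval c * (ascPochhammer K k).eval d * (k.factorial : K)) =
      terminating2F1 b c x (N + 1) +
        (N + 1) / d * (terminating2F1 b c x (N + 1) - terminating2F1 b c x N) := by
  have hd0 : d ≠ 0 := by simpa using ascPochhammer_eval_ne_zero_iff.1 hd 0 N.succ_pos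
  rw [div_mul_eq_mul_div, terminating2F1, terminating2F1, ← binomialTransform_natCast_mul,
    binomialTransform, binomialTransform, sum_div, ← sum_add_distrib]
  refine sum_congr rfl fun k hk ↦ ?_
  have hdk : (ascPochhammer K k).eval d ≠ 0 :=
    ascPochhammer_eval_ne_zero_of_le hd (Nat.lt_succ_iff.1 (mem_range.1 hk))
  have hfac : (k.factorial : K) ≠ 0 := Nat.cast_ne_zero.2 k.factorial_ne_zero
  have hshift : (ascPochhammer K k).eval (d + 1) = (ascPochhammer K k).eval d * (d + k) / d :=
    eq_div_of_mul_eq hd0 (by rw [mul_comm, mul_ascPochhammer_eval_add_one])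
  rw [ascPochhammer_eval_neg_natCast, hshift, neg_pow x]
  field_simp

variable {a : K} {n : ℕ}

theorem terminating2F1_two_contiguous {N : ℕ}
    (ha : (ascPochhammer K (N + 2)).eval (2 * a + 1) ≠ 0) :
    (2 * a + 2 + N) * terminating2F1 a (2 * a + 1) 2 (N + 2) =
      terminating2F1 a (2 * a + 1) 2 (N + 1) + (N + 1) * terminating2F1 a (2 * a + 1) 2 N := by
  linear_combination terminating2F1_contiguous (b := a) (x := 2) ha

theorem terminating2F1_two_even_eq_odd_of_mul_odd
    (ha : (ascPochhammer K (2 * n + 2)).eval (2 * a + 1) ≠ 0)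
    (hodd : (2 * a + 2 * n + 1) * terminating2F1 a (2 * a + 1) 2 (2 * n + 1) =
      (2 * n + 1) * terminating2F1 a (2 * a + 1) 2 (2 * n)) :
    terminating2F1 a (2 * a + 1) 2 (2 * n + 2) = terminating2F1 a (2 * a + 1) 2 (2 * n + 1) := by
  have hne := ascPochhammer_eval_ne_zero_iff.1 ha (2 * n + 1) (by omega)
  have hrec := terminating2F1_two_contiguous ha
  push_cast at hne hrec
  refine mul_left_cancel₀ hne ?_
  linear_combination hrec - hodd

theorem mul_terminating2F1_two_odd (ha : (ascPochhammer K (2 * n + 1)).eval (2 * a + 1) ≠ 0) :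
    (2 * a + 2 * n + 1) * terminating2F1 a (2 * a + 1) 2 (2 * n + 1) =
      (2 * n + 1) * terminating2F1 a (2 * a + 1) 2 (2 * n) := by
  induction n with
  | zero =>
    have hne : 2 * a + 1 ≠ 0 := by simpa using ha
    simp only [Nat.cast_zero, mul_zero, zero_add, add_zero, terminating2F1_zero,
      terminating2F1_one]
    field_simp
    ring
  | succ n ih =>
    have heven := terminating2F1_two_even_eq_odd_of_mul_odd
      (ascPochhammer_eval_ne_zero_of_le ha (by omega))
      (ih (ascPochhammer_eval_ne_zero_of_le ha (by omega)))
    have hrec := terminating2F1_two_contiguous (N := 2 * n + 1) ha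
    simp only [mul_add, mul_one, add_assoc, Nat.reduceAdd] at heven hrec ⊢
    push_cast at hrec ⊢
    rw [heven]
    linear_combination hrec + heven

theorem terminating2F1_two_even_eq_odd (ha : (ascPochhammer K (2 * n + 2)).eval (2 * a + 1) ≠ 0) :
    terminating2F1 a (2 * a + 1) 2 (2 * n + 2) = terminating2F1 a (2 * a + 1) 2 (2 * n + 1) :=
  terminating2F1_two_even_eq_odd_of_mul_odd ha
    (mul_terminating2F1_two_odd (ascPochhammer_eval_ne_zero_of_le ha (by omega)))

theorem terminating2F1_two_odd [NeZero (2 : K)]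
    (ha : (ascPochhammer K (2 * n + 1)).eval (2 * a + 1) ≠ 0) :
    terminating2F1 a (2 * a + 1) 2 (2 * n + 1) =
      1 / (2 * a + 1) *
        ((ascPochhammer K n).eval (3 / 2) / (ascPochhammer K n).eval (a + 3 / 2)) := by
  have h2 : (2 : K) ≠ 0 := NeZero.ne 2
  induction n with
  | zero =>
    have hodd := mul_terminating2F1_two_odd ha
    simp only [Nat.cast_zero, mul_zero, zero_add, add_zero, terminating2F1_zero,
      mul_one] at hodd
    simpa using eq_inv_of_mul_eq_one_right hodd
  | succ n ih =>
    have hne : 2 * a + 2 * n + 3 ≠ 0 := by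
      convert ascPochhammer_eval_ne_zero_iff.1 ha (2 * n + 2) (by omega) using 1
      push_cast
      ring
    have hodd := mul_terminating2F1_two_odd ha
    have heven := terminating2F1_two_even_eq_odd (n := n)
      (ascPochhammer_eval_ne_zero_of_le ha (by omega))
    have hratio : (3 / 2 + (n : K)) / (a + 3 / 2 + n) = (2 * n + 3) / (2 * a + 2 * n + 3) := by
      rw [← mul_div_mul_left _ _ h2]
      congr 1 <;> field_simp <;> ring
    rw [ascPochhammer_succ_eval, ascPochhammer_succ_eval, mul_div_mul_comm, ← mul_assoc,
      ← ih (ascPochhammer_eval_ne_zero_of_le ha (by omega)), hratio, ← heven,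
      mul_div_assoc', eq_div_iff hne]
    rw [mul_add_one 2 n] at hodd ⊢
    push_cast at hodd
    linear_combination hodd

end GaussSum

theorem terminating_3F2_odd_general {K : Type*} [Field K] [CharZero K] (n : ℕ) (a d : K)
    (h2a1 : (ascPochhammer K (2 * n + 1)).eval (2 * a + 1) ≠ 0)
    (hd : (ascPochhammer K (2 * n + 1)).eval d ≠ 0) :
    ∑ k ∈ range (2 * n + 2),
        (ascPochhammer K k).eval (-((2 * n + 1 : ℕ) : K)) * (ascPochhammer K k).eval a *
            (ascPochhammer K k).eval (d + 1) * 2 ^ k /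
          ((ascPochhammer K k).eval (2 * a + 1) * (ascPochhammer K k).eval d *
            (k.factorial : K)) =
      (1 - 2 * a / d) / (2 * a + 1) *
        ((ascPochhammer K n).eval (3 / 2) / (ascPochhammer K n).eval (a + 3 / 2)) := by
  have hodd := mul_terminating2F1_two_odd h2a1
  rw [sum_3F2_add_one_eq_terminating2F1 a (2 * a + 1) 2 hd]
  calc
    _ = (1 - 2 * a / d) * terminating2F1 a (2 * a + 1) 2 (2 * n + 1) := by
      push_cast
      linear_combination hodd / d
    _ = _ := by rw [terminating2F1_two_odd h2a1]; ring

/-- Terminating `₃F₂(2)` summation (odd case):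
`₃F₂(-2n-1, a, d+1; 2a+1, d; 2) = ((1-2a/d)/(2a+1)) (3/2)_n / (a+3/2)_n`. -/
theorem terminating_3F2_odd
    (n : ℕ) (a d : ℂ)
    (h2a1 : ∀ k ≤ 2 * n + 1, poch (2 * a + 1) k ≠ 0)
    (hd : ∀ k ≤ 2 * n + 1, poch d k ≠ 0)
    (hd0 : d ≠ 0)
    (h2a10 : 2 * a + 1 ≠ 0)
    (ha : poch (a + 3 / 2) n ≠ 0) :
    ∑ k ∈ Finset.range (2 * n + 2),
        poch (-((2 * n + 1 : ℕ) : ℂ)) k * poch a k * poch (d + 1) k * 2 ^ k /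
          (poch (2 * a + 1) k * poch d k * (Nat.factorial k : ℂ))
      = ((1 - 2 * a / d) / (2 * a + 1)) * (poch (3 / 2) n / poch (a + 3 / 2) n) :=
  terminating_3F2_odd_general n a d (h2a1 _ le_rfl) (hd _ le_rfl)
end

section
/- Let n be a natural number and let a be a complex number such that (2a)_k ≠ 0 for all 0 ≤ k ≤ 2n and (a+1/2)_n ≠ 0. Then the terminating Gauss sum Σ_{k=0}^{2n} (−2n)_k (a)_k 2^k / ((2a)_k k!) equals (1/2)_n / (a+1/2)_n. -/
/-!
If `X` has the distribution `Beta(a, c - a)`, then `𝔼[X ^ k] = (a)_k / (c)_k`, and the binomial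
theorem gives `₂F₁(-m, a; c; z) = 𝔼[(1 - z X) ^ m]`. Integration by parts against the density
yields `𝔼[X (1 - X) f'(X)] = 𝔼[(c X - a) f(X)]`, which for `f(X) = X ^ k` is the recurrence
`(c + k) 𝔼[X ^ (k + 1)] = (a + k) 𝔼[X ^ k]` and hence holds over any field.
When `c = 2 a`, put `U = 1 - 2 X`, so that `4 X (1 - X) = 1 - U ^ 2` and `c X - a = -a U`. Taking
`f(X) = U ^ (p + 1)` gives `(2 a + p + 1) 𝔼[U ^ (p + 2)] = (p + 1) 𝔼[U ^ p]`, and the even moments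
of `U` follow by induction.
-/

section Field

open Polynomial
open scoped Nat

variable {K : Type*} [Field K]

lemma ascPochhammer_eval_neg_natCast_s6 (m k : ℕ) :
    (ascPochhammer K k).eval (-(m : K)) = (-1) ^ k * (k ! * m.choose k) := by
  rw [ascPochhammer_eval_neg_eq_descPochhammer, descPochhammer_eval_eq_descFactorial,
    Nat.descFactorial_eq_factorial_mul_choose, Nat.cast_mul]

lemma ascPochhammer_eval_ne_zero_of_le_s6 {a : K} {m n : ℕ} (hmn : m ≤ n)
    (hn : (ascPochhammer K n).eval a ≠ 0) : (ascPochhammer K m).eval a ≠ 0 := by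
  rw [Ne, ascPochhammer_eval_eq_zero_iff] at hn ⊢
  exact fun ⟨k, hk, hka⟩ ↦ hn ⟨k, hk.trans_le hmn, hka⟩

lemma ascPochhammer_eval_one_half_ne_zero [CharZero K] (n : ℕ) :
    (ascPochhammer K n).eval (1 / 2 : K) ≠ 0 := by
  rw [Ne, ascPochhammer_eval_eq_zero_iff]
  rintro ⟨k, -, hk⟩
  have : ((2 * k + 1 : ℕ) : K) = 0 := by
    push_cast
    rw [hk]
    ring
  exact (2 * k).succ_ne_zero (Nat.cast_eq_zero.mp this)

/-- The expectation of polynomials under the distribution `Beta(a, c - a)`, over an arbitrary field: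
the linear functional whose `k`-th moment is `(a)_k / (c)_k`. If `(c)_k = 0`, this moment is `0`. -/
noncomputable def betaExpectation (a c : K) : K[X] →ₗ[K] K :=
  (basisMonomials K).constr K fun k ↦ (ascPochhammer K k).eval a / (ascPochhammer K k).eval c

lemma betaExpectation_X_pow (a c : K) (k : ℕ) :
    betaExpectation a c (X ^ k) = (ascPochhammer K k).eval a / (ascPochhammer K k).eval c := by
  have hX : (X ^ k : K[X]) = basisMonomials K k := by
    rw [coe_basisMonomials, X_pow_eq_monomial]
  rw [hX, betaExpectation, Module.Basis.constr_basis]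

lemma betaExpectation_C_mul (a c r : K) (f : K[X]) :
    betaExpectation a c (C r * f) = r * betaExpectation a c f := by
  rw [C_mul', map_smul, smul_eq_mul]

lemma betaExpectation_X_pow_succ (a : K) {c : K} {k : ℕ}
    (hc : (ascPochhammer K (k + 1)).eval c ≠ 0) :
    (c + k) * betaExpectation a c (X ^ (k + 1)) = (a + k) * betaExpectation a c (X ^ k) := by
  rw [ascPochhammer_succ_eval] at hc
  have hck := left_ne_zero_of_mul hc
  have hc_add := right_ne_zero_of_mul hc
  simp only [betaExpectation_X_pow, ascPochhammer_succ_eval]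
  field_simp

lemma betaExpectation_X_mul_one_sub_X_mul_derivative (a : K) {c : K} {N : ℕ}
    (hc : (ascPochhammer K (N + 1)).eval c ≠ 0) {f : K[X]} (hf : f.natDegree ≤ N) :
    betaExpectation a c (X * (1 - X) * derivative f) =
      betaExpectation a c ((C c * X - C a) * f) := by
  refine induction_with_natDegree_le (fun f ↦ betaExpectation a c (X * (1 - X) * derivative f) =
    betaExpectation a c ((C c * X - C a) * f)) N (by simp) (fun k r _ hk ↦ ?_)
    (fun f g _ _ hf hg ↦ ?_) f hf
  · have hderiv : X * (1 - X) * derivative (C r * X ^ k) =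
        C (r * k) * X ^ k - C (r * k) * X ^ (k + 1) := by
      rw [derivative_C_mul_X_pow]
      cases k with
      | zero => simp
      | succ k =>
        rw [Nat.add_sub_cancel]
        ring
    have hmul : (C c * X - C a) * (C r * X ^ k) =
        C (r * c) * X ^ (k + 1) - C (r * a) * X ^ k := by
      simp only [C_mul]
      ring
    simp only [hderiv, hmul, map_sub, betaExpectation_C_mul]
    have hck := ascPochhammer_eval_ne_zero_of_le_s6 (Nat.succ_le_succ hk) hc
    linear_combination -r * betaExpectation_X_pow_succ a hck
  · simp only [mul_add, map_add, hf, hg]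

lemma betaExpectation_one_sub_C_mul_X_pow [CharZero K] (a c z : K) (m : ℕ) :
    betaExpectation a c ((1 - C z * X) ^ m) =
      ∑ k ∈ Finset.range (m + 1),
        (ascPochhammer K k).eval (-(m : K)) * (ascPochhammer K k).eval a * z ^ k /
          ((ascPochhammer K k).eval c * k !) := by
  have hbinom : (1 - C z * X) ^ m =
      ∑ k ∈ Finset.range (m + 1), C ((-z) ^ k * m.choose k) * X ^ k := by
    rw [sub_eq_neg_add, add_pow]
    refine Finset.sum_congr rfl fun k _ ↦ ?_
    simp only [one_pow, C_mul, C_pow, C_neg, C_eq_natCast]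
    ring
  simp only [hbinom, map_sum, betaExpectation_C_mul, betaExpectation_X_pow]
  refine Finset.sum_congr rfl fun k _ ↦ ?_
  have hk : (k ! : K) ≠ 0 := Nat.cast_ne_zero.mpr k.factorial_ne_zero
  rw [ascPochhammer_eval_neg_natCast_s6, neg_pow z]
  field_simp

lemma betaExpectation_one_sub_two_mul_X_pow_add_two {a : K} {p : ℕ}
    (ha : (ascPochhammer K (p + 2)).eval (2 * a) ≠ 0) :
    (2 * a + p + 1) * betaExpectation a (2 * a) ((1 - C 2 * X) ^ (p + 2)) =
      (p + 1) * betaExpectation a (2 * a) ((1 - C 2 * X) ^ p) := by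
  set U : K[X] := 1 - C 2 * X with hU
  have hdeg : (U ^ (p + 1)).natDegree ≤ p + 1 := by
    rw [hU]
    compute_degree
  have hderiv : C 2 * (X * (1 - X) * derivative (U ^ (p + 1))) =
      C (p + 1 : K) * U ^ (p + 2) - C (p + 1 : K) * U ^ p := by
    have : derivative U = -C 2 := by simp [hU]
    rw [derivative_pow_succ, this, hU]
    simp only [map_ofNat]
    ring
  have hmul : C 2 * ((C (2 * a) * X - C a) * U ^ (p + 1)) = -(C (2 * a) * U ^ (p + 2)) := by
    rw [hU]
    simp only [C_mul, map_ofNat]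
    ring
  have hparts := congrArg (2 * ·) (betaExpectation_X_mul_one_sub_X_mul_derivative a ha hdeg)
  simp only [← betaExpectation_C_mul, hderiv, hmul] at hparts
  simp only [map_sub, map_neg, betaExpectation_C_mul] at hparts
  linear_combination hparts

lemma betaExpectation_one_sub_two_mul_X_pow_two_mul [NeZero (2 : K)] {a : K} {n : ℕ}
    (ha : (ascPochhammer K (2 * n)).eval (2 * a) ≠ 0) :
    betaExpectation a (2 * a) ((1 - C 2 * X) ^ (2 * n)) * (ascPochhammer K n).eval (a + 1 / 2) =
      (ascPochhammer K n).eval (1 / 2) := by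
  induction n with
  | zero => simpa using betaExpectation_X_pow a (2 * a) 0
  | succ n ih =>
    have hrec := betaExpectation_one_sub_two_mul_X_pow_add_two (p := 2 * n) ha
    have hn := ih (ascPochhammer_eval_ne_zero_of_le_s6 (by lia) ha)
    have htwo : (2 : K) * (1 / 2) = 1 := mul_one_div_cancel two_ne_zero
    set E : ℕ → K := fun m ↦ betaExpectation a (2 * a) ((1 - C 2 * X) ^ m)
    set P := (ascPochhammer K n).eval (a + 1 / 2)
    calc E (2 * (n + 1)) * (ascPochhammer K (n + 1)).eval (a + 1 / 2)
        = P * (1 / 2) * ((2 * a + (2 * n : ℕ) + 1) * E (2 * n + 2)) := by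
          rw [ascPochhammer_succ_eval, mul_add_one]
          push_cast
          linear_combination -P * E (2 * n + 2) * (a + n) * htwo
      _ = P * (1 / 2) * (((2 * n : ℕ) + 1) * E (2 * n)) := by rw [hrec]
      _ = (ascPochhammer K (n + 1)).eval (1 / 2) := by
          rw [ascPochhammer_succ_eval, ← hn]
          push_cast
          linear_combination P * E (2 * n) * n * htwo

theorem terminating_2F1_even_general [CharZero K] (n : ℕ) (a : K)
    (h2a : (ascPochhammer K (2 * n)).eval (2 * a) ≠ 0) :
    ∑ k ∈ Finset.range (2 * n + 1),
        (ascPochhammer K k).eval (-((2 * n : ℕ) : K)) * (ascPochhammer K k).eval a * 2 ^ k /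
          ((ascPochhammer K k).eval (2 * a) * k !) =
      (ascPochhammer K n).eval (1 / 2) / (ascPochhammer K n).eval (a + 1 / 2) := by
  have hmoment := betaExpectation_one_sub_two_mul_X_pow_two_mul h2a
  have ha : (ascPochhammer K n).eval (a + 1 / 2) ≠ 0 :=
    right_ne_zero_of_mul (hmoment ▸ ascPochhammer_eval_one_half_ne_zero n)
  rw [← betaExpectation_one_sub_C_mul_X_pow]
  exact eq_div_of_mul_eq ha hmoment

end Field

/-- Terminating Gauss sum (even case): `₂F₁(-2n, a; 2a; 2) = (1/2)_n / (a+1/2)_n`. -/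
theorem terminating_2F1_even
    (n : ℕ) (a : ℂ)
    (h2a : ∀ k ≤ 2 * n, poch (2 * a) k ≠ 0)
    (ha : poch (a + 1 / 2) n ≠ 0) :
    ∑ k ∈ Finset.range (2 * n + 1),
        poch (-((2 * n : ℕ) : ℂ)) k * poch a k * 2 ^ k /
          (poch (2 * a) k * (Nat.factorial k : ℂ))
      = poch (1 / 2) n / poch (a + 1 / 2) n :=
  terminating_2F1_even_general n a (h2a _ le_rfl)
end

section
/- Let x be a complex number and let a, d be complex numbers with d ≠ 0, 2a+1 ≠ 0, such that a/2, a+1/2, a+1, a+3/2 and d are not nonpositive integers or zero (so all Pochhammer denominators are nonzero). Then Σ_{k=0}^∞ (a/2)_k ((a+1)/2)_k (d+1)_k x^{2k} / ((1/2)_k (a+1/2)_k (a+1)_k (d)_k k!) = cosh(x) · Σ_{k=0}^∞ (x²/4)^k / ((a+1/2)_k k!) − ((1 − a/d)/(2a+1)) · x·sinh(x) · Σ_{k=0}^∞ (x²/4)^k / ((a+3/2)_k k!). -/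
section Pochhammer

open Finset

variable (a b c d : ℂ) (m n : ℕ)

lemma poch_zero : poch a 0 = 1 := by simp [poch]

lemma poch_succ : poch a (n + 1) = poch a n * (a + n) := by
  simp [poch, ascPochhammer_succ_eval]

lemma poch_one_left : poch 1 n = n.factorial := by simp [poch]

lemma poch_add : poch a (m + n) = poch a m * poch (a + m) n := by
  simp [poch, ← ascPochhammer_mul]

lemma poch_succ_left : poch a (n + 1) = a * poch (a + 1) n := by
  simp [poch, ascPochhammer_succ_left]

lemma poch_two_mul : poch a (2 * n) = 4 ^ n * (poch (a / 2) n * poch ((a + 1) / 2) n) := by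
  induction n with
  | zero => simp [poch_zero]
  | succ n ih =>
    rw [show 2 * (n + 1) = 2 * n + 1 + 1 by ring, poch_succ, poch_succ, ih, poch_succ, poch_succ]
    push_cast
    ring

lemma factorial_two_mul_eq_poch :
    ((2 * n).factorial : ℂ) = 4 ^ n * (poch (1 / 2) n * n.factorial) := by
  rw [← poch_one_left, poch_two_mul, ← poch_one_left, show ((1 + 1) / 2 : ℂ) = 1 by norm_num]

lemma factorial_two_mul_add_one_eq_poch :
    ((2 * n + 1).factorial : ℂ) = 4 ^ n * (poch (3 / 2) n * n.factorial) := by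
  rw [← poch_one_left, poch_succ_left, poch_two_mul, ← poch_one_left,
    show ((1 + 1) / 2 : ℂ) = 1 by norm_num, show ((1 + 1 + 1) / 2 : ℂ) = 3 / 2 by norm_num,
    one_mul, mul_comm (poch 1 n)]

lemma descPochhammer_smeval_eq_poch :
    (descPochhammer ℤ n).smeval a = poch (a - n + 1) n := by
  rw [Polynomial.descPochhammer_smeval_eq_ascPochhammer,
    Polynomial.ascPochhammer_smeval_eq_eval, poch]

lemma sum_antidiagonal_choose_mul_poch :
    ∑ p ∈ antidiagonal n, (n.choose p.1 : ℂ) * (poch (c + p.2) p.1 * poch (b + p.1) p.2) =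
      poch (b + c + n - 1) n := by
  have vandermonde :=
    Ring.descPochhammer_smeval_add n (Commute.all (c + n - 1) (b + n - 1))
  simp only [descPochhammer_smeval_eq_poch] at vandermonde
  rw [show b + c + n - 1 = c + n - 1 + (b + n - 1) - n + 1 by ring, vandermonde]
  refine sum_congr rfl fun p hp => ?_
  obtain rfl := mem_antidiagonal.mp hp
  push_cast
  ring_nf

/-- The identity
`(a)_{2n} (d + 1)_n / ((a + 1)_n (d)_n) = (a + n)_n - (1 - a / d) n (a + n + 1)_{n-1}`
with its denominators cleared; the factor `n` hides the truncated subtraction `n - 1` at `n = 0`. -/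
lemma mul_poch_two_mul_mul_poch_add_one :
    d * (poch a (2 * n) * poch (d + 1) n) =
      poch (a + 1) n * poch d n *
        (d * poch (a + n) n - (d - a) * (n * poch (a + n + 1) (n - 1))) := by
  have hd : d * poch (d + 1) n = poch d n * (d + n) := by rw [← poch_succ_left, poch_succ]
  cases n with
  | zero => simp [poch_zero]
  | succ m =>
    have ha : poch a (2 * (m + 1)) = a * poch (a + 1) (m + 1) * poch (a + (m + 1 : ℕ) + 1) m := by
      rw [show 2 * (m + 1) = m + 1 + 1 + m by ring, poch_add, poch_succ_left]
      push_cast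
      ring_nf
    rw [ha, mul_left_comm, hd, poch_succ_left (a + (m + 1 : ℕ)), Nat.add_sub_cancel]
    ring

end Pochhammer

section NonvanishingPochhammer

open Finset

variable {a b c : ℂ}

lemma poch_ne_zero (ha : ∀ n : ℕ, a ≠ -(n : ℂ)) (n : ℕ) : poch a n ≠ 0 := by
  rw [poch, Ne, ascPochhammer_eval_eq_zero_iff]
  rintro ⟨k, -, hk⟩
  exact ha k (by rw [hk, neg_neg])

lemma add_one_ne_neg_natCast (ha : ∀ n : ℕ, a ≠ -(n : ℂ)) (n : ℕ) : a + 1 ≠ -(n : ℂ) :=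
  fun h => ha (n + 1) (by push_cast; linear_combination h)

lemma ne_neg_natCast_of_re_pos (ha : 0 < a.re) (n : ℕ) : a ≠ -(n : ℂ) := by
  rintro rfl
  rw [Complex.neg_re, Complex.natCast_re, neg_pos] at ha
  exact ha.not_ge n.cast_nonneg

lemma sum_antidiagonal_inv_poch_mul_factorial
    (hb : ∀ n : ℕ, b ≠ -(n : ℂ)) (hc : ∀ n : ℕ, c ≠ -(n : ℂ)) (n : ℕ) :
    ∑ p ∈ antidiagonal n,
        (poch b p.1 * (p.1.factorial : ℂ))⁻¹ * (poch c p.2 * (p.2.factorial : ℂ))⁻¹ =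
      poch (b + c + n - 1) n / (poch b n * poch c n * n.factorial) := by
  rw [← sum_antidiagonal_choose_mul_poch, sum_div]
  refine sum_congr rfl ?_
  rintro ⟨i, j⟩ hij
  obtain rfl := mem_antidiagonal.mp hij
  have hbij : poch b (i + j) = poch b i * poch (b + i) j := poch_add b i j
  have hcij : poch c (i + j) = poch c j * poch (c + j) i := by rw [add_comm, poch_add]
  have hb0 := poch_ne_zero hb (i + j)
  have hc0 := poch_ne_zero hc (i + j)
  rw [hbij, mul_ne_zero_iff] at hb0
  rw [hcij, mul_ne_zero_iff] at hc0
  obtain ⟨hbi, hbj⟩ := hb0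
  obtain ⟨hcj, hci⟩ := hc0
  rw [hbij, hcij, Nat.cast_add_choose]
  have factorial_ne (m : ℕ) : (m.factorial : ℂ) ≠ 0 := mod_cast m.factorial_ne_zero
  field_simp [factorial_ne]

end NonvanishingPochhammer

section HypergeometricLimit

open Filter Finset Topology

variable {b c d : ℂ}

/-- The confluent hypergeometric limit function `₀F₁(-; b; z)`, as a function of the lower parameter
and the argument. A term with `(b)_k = 0` counts as `0`, since `x / 0 = 0`. -/
noncomputable def hyp0F1 (b z : ℂ) : ℂ := ∑' k : ℕ, z ^ k / (poch b k * k.factorial)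

lemma cosh_eq_hyp0F1 (x : ℂ) : Complex.cosh x = hyp0F1 (1 / 2) (x ^ 2 / 4) := by
  rw [Complex.cosh_eq_tsum, hyp0F1]
  refine tsum_congr fun n => ?_
  rw [factorial_two_mul_eq_poch, div_pow, ← pow_mul, div_div]

lemma sinh_eq_mul_hyp0F1 (x : ℂ) : Complex.sinh x = x * hyp0F1 (3 / 2) (x ^ 2 / 4) := by
  rw [Complex.sinh_eq_tsum, hyp0F1, ← tsum_mul_left]
  refine tsum_congr fun n => ?_
  rw [factorial_two_mul_add_one_eq_poch, div_pow, ← pow_mul, div_div, pow_succ', mul_div_assoc]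

lemma tendsto_hyp0F1_ratio (b z : ℂ) :
    Tendsto (fun k : ℕ => z * (b + k)⁻¹ * (k + 1 : ℂ)⁻¹) atTop (𝓝 0) := by
  have shift_inv (w : ℂ) : Tendsto (fun k : ℕ => (w + k)⁻¹) atTop (𝓝 0) :=
    tendsto_inv₀_cobounded.comp
      ((tendsto_const_add_cobounded w).comp tendsto_natCast_atTop_cobounded)
  simpa [add_comm] using ((shift_inv b).const_mul z).mul (shift_inv 1)

lemma summable_hyp0F1 (b z : ℂ) :
    Summable fun k : ℕ => z ^ k / (poch b k * k.factorial) := by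
  have ratio_small := (tendsto_hyp0F1_ratio b z).norm.eventually_le_const
    (show ‖(0 : ℂ)‖ < 1 / 2 by norm_num)
  refine summable_of_ratio_norm_eventually_le (r := 1 / 2) (by norm_num) ?_
  filter_upwards [ratio_small] with k hk
  have ratio_eq : z ^ (k + 1) / (poch b (k + 1) * (k + 1).factorial) =
      z * (b + k)⁻¹ * (k + 1 : ℂ)⁻¹ * (z ^ k / (poch b k * k.factorial)) := by
    rw [poch_succ, Nat.factorial_succ]
    push_cast
    simp only [div_eq_mul_inv, mul_inv]
    ring
  rw [ratio_eq, norm_mul]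
  gcongr

lemma hasSum_hyp0F1_mul_hyp0F1
    (hb : ∀ n : ℕ, b ≠ -(n : ℂ)) (hc : ∀ n : ℕ, c ≠ -(n : ℂ)) (z : ℂ) :
    HasSum (fun n : ℕ => poch (b + c + n - 1) n / (poch b n * poch c n * n.factorial) * z ^ n)
      (hyp0F1 b z * hyp0F1 c z) := by
  have hfb := (summable_hyp0F1 b z).norm
  have hfc := (summable_hyp0F1 c z).norm
  rw [hyp0F1, hyp0F1, tsum_mul_tsum_eq_tsum_sum_antidiagonal_of_summable_norm hfb hfc]
  refine (summable_norm_sum_mul_antidiagonal_of_summable_norm hfb hfc).of_norm.hasSum.congr_fun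
    fun n => ?_
  rw [← sum_antidiagonal_inv_poch_mul_factorial hb hc, sum_mul]
  refine sum_congr rfl fun p hp => ?_
  rw [← mem_antidiagonal.mp hp]
  ring

lemma hasSum_mul_hyp0F1_add_one_mul_hyp0F1_add_one
    (hb : ∀ n : ℕ, b ≠ -(n : ℂ)) (hc : ∀ n : ℕ, c ≠ -(n : ℂ)) (z : ℂ) :
    HasSum (fun n : ℕ =>
        n * poch (b + c + n) (n - 1) / (poch b n * poch c n * n.factorial) * z ^ n)
      (z / (b * c) * (hyp0F1 (b + 1) z * hyp0F1 (c + 1) z)) := by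
  rw [← hasSum_nat_add_iff' 1, sum_range_one, Nat.cast_zero, zero_mul, zero_div, zero_mul, sub_zero]
  refine ((hasSum_hyp0F1_mul_hyp0F1 (add_one_ne_neg_natCast hb)
    (add_one_ne_neg_natCast hc) z).mul_left (z / (b * c))).congr_fun fun n => ?_
  have hn : (n + 1 : ℂ) ≠ 0 := mod_cast n.succ_ne_zero
  rw [poch_succ_left b, poch_succ_left c, Nat.factorial_succ, Nat.add_sub_cancel,
    show b + 1 + (c + 1) + n - 1 = b + c + (n + 1 : ℕ) by push_cast; ring]
  push_cast
  field_simp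
  ring

theorem example_cosh_general
    (hb : ∀ n : ℕ, b ≠ -(n : ℂ)) (hc : ∀ n : ℕ, c ≠ -(n : ℂ))
    (hbc : ∀ n : ℕ, b + c ≠ -(n : ℂ)) (hd : ∀ n : ℕ, d ≠ -(n : ℂ)) (z : ℂ) :
    HasSum (fun k : ℕ =>
        poch ((b + c - 1) / 2) k * poch ((b + c) / 2) k * poch (d + 1) k * (4 * z) ^ k /
          (poch b k * poch c k * poch (b + c) k * poch d k * k.factorial))
      (hyp0F1 b z * hyp0F1 c z -
        (1 - (b + c - 1) / d) * (z / (b * c) * (hyp0F1 (b + 1) z * hyp0F1 (c + 1) z))) := by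
  refine ((hasSum_hyp0F1_mul_hyp0F1 hb hc z).sub
    ((hasSum_mul_hyp0F1_add_one_mul_hyp0F1_add_one hb hc z).mul_left _)).congr_fun fun n => ?_
  have hd0 : d ≠ 0 := by simpa using hd 0
  have hbn := poch_ne_zero hb n
  have hcn := poch_ne_zero hc n
  have hbcn := poch_ne_zero hbc n
  have hdn := poch_ne_zero hd n
  have hn : (n.factorial : ℂ) ≠ 0 := mod_cast n.factorial_ne_zero
  have numerator := mul_poch_two_mul_mul_poch_add_one (b + c - 1) d n
  rw [poch_two_mul, sub_add_cancel, add_right_comm, sub_add_cancel,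
    sub_add_eq_add_sub] at numerator
  field_simp
  linear_combination z ^ n * numerator

end HypergeometricLimit

/-- Example (b) of the paper:
`₃F₄(a/2, (a+1)/2, d+1; 1/2, a+1/2, a+1, d; x²)
  = cosh x · ₀F₁(-; a+1/2; x²/4) - ((1-a/d)/(2a+1)) x sinh x · ₀F₁(-; a+3/2; x²/4)`. -/
theorem example_cosh
    (x a d : ℂ)
    (hd0 : d ≠ 0)
    (h2a10 : 2 * a + 1 ≠ 0)
    (ha2 : ∀ n : ℕ, a / 2 ≠ -(n : ℂ))
    (ha1 : ∀ n : ℕ, a + 1 / 2 ≠ -(n : ℂ))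
    (hap1 : ∀ n : ℕ, a + 1 ≠ -(n : ℂ))
    (ha3 : ∀ n : ℕ, a + 3 / 2 ≠ -(n : ℂ))
    (hd : ∀ n : ℕ, d ≠ -(n : ℂ)) :
    ∑' k : ℕ, poch (a / 2) k * poch ((a + 1) / 2) k * poch (d + 1) k * x ^ (2 * k) /
        (poch (1 / 2) k * poch (a + 1 / 2) k * poch (a + 1) k * poch d k *
          (Nat.factorial k : ℂ))
      = Complex.cosh x *
          (∑' k : ℕ, (x ^ 2 / 4) ^ k / (poch (a + 1 / 2) k * (Nat.factorial k : ℂ)))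
        - ((1 - a / d) / (2 * a + 1)) * (x * Complex.sinh x) *
          ∑' k : ℕ, (x ^ 2 / 4) ^ k / (poch (a + 3 / 2) k * (Nat.factorial k : ℂ)) := by
  have half_add : 1 / 2 + (a + 1 / 2) = a + 1 := by ring
  have half_ne (n : ℕ) : (1 / 2 : ℂ) ≠ -(n : ℂ) := ne_neg_natCast_of_re_pos (by norm_num) n
  convert (example_cosh_general half_ne ha1 (by rwa [half_add]) hd (x ^ 2 / 4)).tsum_eq using 1
  · simp only [half_add, add_sub_cancel_right, pow_mul, show 4 * (x ^ 2 / 4) = x ^ 2 by ring]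
  · rw [half_add, add_sub_cancel_right, show (1 / 2 + 1 : ℂ) = 3 / 2 by norm_num,
      show a + 1 / 2 + 1 = a + 3 / 2 by ring, div_div (x ^ 2),
      show 4 * (1 / 2 * (a + 1 / 2)) = 2 * a + 1 by ring,
      cosh_eq_hyp0F1, sinh_eq_mul_hyp0F1, ← hyp0F1, ← hyp0F1]
    ring
end
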